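/- Let S be the usual step-reinforced random walk on the additive group (ℤ₂, +) with reinforcement parameter α ∈ (0,1) and step distribution μ given by μ(0) = μ(1) = 1/2. Then for every n ≥ 1: ℙ(S_{2n−1} = 0) = 1/2, and e^{−C(1−α)n}·αⁿ ≤ 2ℙ(S_{2n} = 0) − 1 ≤ αⁿ, where C is a positive constant not depending on α and n. In particular, for every n ≥ 1, lim_{α→0⁺} log(2ℙ(S_{2n}=0) − 1)/log α = n and lim_{α→1⁻} log(1 − ℙ(S_{2n}=0))/log(1−α) = 1. -/

import Mathlib

open MeasureTheory ProbabilityTheory Filter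
open scoped ENNReal NNReal Topology

namespace SRRW

variable {Ω : Type*} [MeasurableSpace Ω] {V : Type*} [AddCommGroup V] [MeasurableSpace V]

/-- The family combining `(ξ_n)`, `(u_n)` and `(g_n)`, with values in the common
measurable space `Bool ⊕ ℕ ⊕ V`. -/
def fam (ξ : ℕ → Ω → Bool) (u : ℕ → Ω → ℕ) (g : ℕ → Ω → V) :
    (ℕ ⊕ ℕ ⊕ ℕ) → Ω → (Bool ⊕ ℕ ⊕ V)
  | .inl n => fun ω => .inl (ξ n ω)
  | .inr (.inl n) => fun ω => .inr (.inl (u n ω))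
  | .inr (.inr n) => fun ω => .inr (.inr (g n ω))

/-- The driving randomness of a (generalized) step-reinforced random walk:
`(ξ_n)_{n ≥ 2}` are i.i.d. Bernoulli(α), `(u_n)_{n ≥ 2}` are independent with `u_n`
uniform on `{1, …, n-1}`, `(g_n)_{n ≥ 1}` are i.i.d. with law `μ` (the fresh steps),
and all of them are jointly independent. -/
structure IsDriving (P : Measure Ω) (α : ℝ) (μ : Measure V)
    (ξ : ℕ → Ω → Bool) (u : ℕ → Ω → ℕ) (g : ℕ → Ω → V) : Prop where
  meas_ξ : ∀ n, Measurable (ξ n)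
  meas_u : ∀ n, Measurable (u n)
  meas_g : ∀ n, Measurable (g n)
  ξ_law : ∀ n, 2 ≤ n → P {ω | ξ n ω = true} = ENNReal.ofReal α
  u_range : ∀ n, 2 ≤ n → ∀ ω, 1 ≤ u n ω ∧ u n ω < n
  u_law : ∀ n, 2 ≤ n → ∀ k, 1 ≤ k → k < n → P {ω | u n ω = k} = ((n - 1 : ℕ) : ℝ≥0∞)⁻¹
  g_law : ∀ n, 1 ≤ n → P.map (g n) = μ
  indep : iIndepFun (fam ξ u g) P

/-- `X` is the step sequence of a generalized step-reinforced random walk (written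
additively) with reinforcement parameter `α`, step distribution `μ` and transformations
`(T_n)_{n ≥ 2}`: `X_1 = g_1` and, for `n ≥ 2`, `X_n = T_n(X_{u_n})` if `ξ_n = 1` while
`X_n = g_n` (a fresh `μ`-distributed step) if `ξ_n = 0`.  Each `T_n` is a (random)
measurable transformation of `V` which is independent of `(ξ_k)_{k ≥ n}`, `(u_k)_{k ≥ n}`
and of the fresh steps `(g_k)_{k ≥ n}`. -/
def IsGenSRRWAdd (P : Measure Ω) (α : ℝ) (μ : Measure V)
    (T : ℕ → Ω → V → V) (X : ℕ → Ω → V) : Prop :=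
  ∃ ξ u g, IsDriving P α μ ξ u g ∧
    (∀ n, Measurable (Function.uncurry (T n))) ∧
    (∀ n, 2 ≤ n → IndepFun
      (fun ω (k : {k : ℕ // n ≤ k}) => (ξ k ω, u k ω, g k ω))
      (fun ω => T n ω) P) ∧
    (∀ ω, X 1 ω = g 1 ω) ∧
    (∀ n, 2 ≤ n → ∀ ω, X n ω = if ξ n ω then T n ω (X (u n ω) ω) else g n ω)

/-- `X` is the step sequence of a usual step-reinforced random walk (all transformations
are the identity). -/
def IsSRRWAdd (P : Measure Ω) (α : ℝ) (μ : Measure V) (X : ℕ → Ω → V) : Prop :=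
  IsGenSRRWAdd P α μ (fun _ _ => id) X

/-- The position of the walk: `S_n = X_1 + X_2 + ⋯ + X_n`. -/
def pos (X : ℕ → Ω → V) (n : ℕ) (ω : Ω) : V :=
  ∑ k ∈ Finset.range n, X (k + 1) ω

end SRRW

open SRRW

/-!
Let `χ` be the sign character of `ℤ/2ℤ`, so that `2ℙ(S_n = 0) - 1 = 𝔼[χ(X_1) ⋯ χ(X_n)]`. More
generally consider the correlations `e A = 𝔼[∏ i ∈ A, χ (X i)]` of finite sets `A` of times. A fresh
step contributes the factor `𝔼[χ] = 0`, while a copy of `X k` contributes `χ (X k)`, and since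
`χ² = 1` this toggles the membership of `k` in `A`. Conditioning on the largest time `m + 1` hence
gives `e (A ∪ {m + 1}) = α · avg_{k ≤ m} e (A ∆ {k})`.

Each application of this identity costs a factor `α` and lowers `#A` by `2` or `0`. So `e A = 0` for
odd `#A`, while at least `#A / 2` applications are needed to reach `∅`, whence `e A ≤ α ^ (#A / 2)`.
At most `m` applications are needed when `A ⊆ {1, …, m}`, which gives `α ^ m ≤ e A` for even `#A`
and is sharp enough for `α ≥ 1/2`. For `α ≤ 1/2` one keeps only the toggles that remove an element
of `A`: from `{1, …, 2n}` this leaves `αⁿ ∏_{j < n} (2j + 1) / (n + j) ≥ (α / 2)ⁿ`.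
-/

namespace SRRW

open Finset
open scoped BigOperators symmDiff Asymptotics

/-! ### Toggle recursions -/

section Toggle

variable {ι : Type*} [DecidableEq ι] {A : Finset ι} {k : ι}

lemma symmDiff_singleton_of_mem (hk : k ∈ A) : A ∆ {k} = A.erase k := by
  ext i
  grind [mem_symmDiff]

lemma symmDiff_singleton_of_notMem (hk : k ∉ A) : A ∆ {k} = insert k A := by
  ext i
  grind [mem_symmDiff]

lemma card_symmDiff_singleton_of_mem (hk : k ∈ A) : #(A ∆ {k}) + 1 = #A := by
  rw [symmDiff_singleton_of_mem hk, card_erase_add_one hk]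

lemma card_symmDiff_singleton_of_notMem (hk : k ∉ A) : #(A ∆ {k}) = #A + 1 := by
  rw [symmDiff_singleton_of_notMem hk, card_insert_of_notMem hk]

lemma card_le_card_symmDiff_singleton_add_one (A : Finset ι) (k : ι) : #A ≤ #(A ∆ {k}) + 1 := by
  by_cases hk : k ∈ A
  · exact (card_symmDiff_singleton_of_mem hk).ge
  · have := card_symmDiff_singleton_of_notMem hk
    omega

lemma even_card_symmDiff_singleton : Even #(A ∆ {k}) ↔ Odd #A := by
  by_cases hk : k ∈ A
  · rw [← card_symmDiff_singleton_of_mem hk, Nat.odd_add_one, Nat.not_odd_iff_even]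
  · rw [card_symmDiff_singleton_of_notMem hk, Nat.even_add_one, Nat.not_even_iff_odd]

lemma odd_card_symmDiff_singleton : Odd #(A ∆ {k}) ↔ Even #A := by
  rw [← Nat.not_even_iff_odd, even_card_symmDiff_singleton, Nat.not_odd_iff_even]

lemma symmDiff_singleton_subset {B : Finset ι} (hA : A ⊆ B) (hk : k ∈ B) : A ∆ {k} ⊆ B :=
  symmDiff_subset_union.trans (union_subset hA (singleton_subset_iff.2 hk))

lemma prod_symmDiff_singleton {M : Type*} [CommMonoid M] {f : ι → M} (hf : f k * f k = 1) :
    ∏ i ∈ A ∆ {k}, f i = f k * ∏ i ∈ A, f i := by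
  by_cases hk : k ∈ A
  · rw [symmDiff_singleton_of_mem hk, ← mul_prod_erase A f hk, ← mul_assoc, hf, one_mul]
  · rw [symmDiff_singleton_of_notMem hk, prod_insert hk]

end Toggle

@[elab_as_elim]
lemma induction_of_zero_notMem {motive : Finset ℕ → Prop} {A : Finset ℕ} (hA : 0 ∉ A)
    (empty : motive ∅)
    (insert : ∀ m, ∀ B ⊆ Icc 1 m, (∀ B' ⊆ Icc 1 m, motive B') → motive (insert (m + 1) B)) :
    motive A := by
  suffices h : ∀ m, ∀ B ⊆ Icc 1 m, motive B by
    refine h (A.sup id) A fun i hi => mem_Icc.2 ⟨?_, le_sup (f := id) hi⟩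
    exact Nat.one_le_iff_ne_zero.2 (ne_of_mem_of_not_mem hi hA)
  intro m
  induction m with
  | zero =>
    intro B hB
    rwa [subset_empty.1 hB]
  | succ m ih =>
    intro B hB
    rw [← insert_Icc_right_eq_Icc_add_one (by omega), subset_insert_iff] at hB
    by_cases hm : m + 1 ∈ B
    · rw [← insert_erase hm]
      exact insert m _ hB ih
    · exact ih B (erase_eq_of_notMem hm ▸ hB)

/-- The recursion satisfied by the correlations `e A = 𝔼[∏ i ∈ A, χ (X i)]` of the steps of a
reinforced walk, for a centred `±1`-valued observable `χ`: the latest step is with probability `α`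
a copy of a uniformly chosen earlier step `k`, and multiplying by `χ (X k)` toggles the membership
of `k`. For `m = 0` the average is over the empty set, hence `0`, so that `e {1} = 0`. -/
structure ToggleRecursion (α : ℝ) (e : Finset ℕ → ℝ) : Prop where
  apply_empty : e ∅ = 1
  apply_insert : ∀ m, ∀ A ⊆ Icc 1 m,
    e (insert (m + 1) A) = α * 𝔼 k ∈ Icc 1 m, e (A ∆ {k})

namespace ToggleRecursion

variable {α : ℝ} {e : Finset ℕ → ℝ} {A : Finset ℕ} {n k : ℕ}

lemma eq_zero_of_odd_card (he : ToggleRecursion α e) (hA : 0 ∉ A) (hodd : Odd #A) : e A = 0 := by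
  revert hodd
  refine induction_of_zero_notMem hA (by simp) fun m B hB ih hodd => ?_
  have hm : m + 1 ∉ B := fun h => by simpa using hB h
  rw [card_insert_of_notMem hm, Nat.odd_add_one, Nat.not_odd_iff_even] at hodd
  rw [he.apply_insert m B hB, expect_eq_zero, mul_zero]
  exact fun i hi => ih _ (symmDiff_singleton_subset hB hi) (odd_card_symmDiff_singleton.2 hodd)

lemma le_pow (he : ToggleRecursion α e) (hα₀ : 0 ≤ α) (hα₁ : α ≤ 1) (hA : 0 ∉ A)
    (hk : 2 * k ≤ #A) : e A ≤ α ^ k := by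
  refine induction_of_zero_notMem (motive := fun A => ∀ k, 2 * k ≤ #A → e A ≤ α ^ k) hA
    (fun k hk => ?_) (fun m B hB ih k hk => ?_) k hk
  · replace hk : 2 * k ≤ 0 := hk
    obtain rfl : k = 0 := by omega
    simp [he.apply_empty]
  have hcard := card_insert_le (m + 1) B
  have havg : 𝔼 i ∈ Icc 1 m, e (B ∆ {i}) ≤ α ^ (k - 1) := by
    rcases m.eq_zero_or_pos with rfl | hm
    · simpa using pow_nonneg hα₀ (k - 1)
    · refine expect_le (nonempty_Icc.2 hm) fun i hi => ih _ (symmDiff_singleton_subset hB hi) _ ?_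
      have := card_le_card_symmDiff_singleton_add_one B i
      omega
  calc e (insert (m + 1) B) = α * 𝔼 i ∈ Icc 1 m, e (B ∆ {i}) := he.apply_insert m B hB
    _ ≤ α * α ^ (k - 1) := mul_le_mul_of_nonneg_left havg hα₀
    _ = α ^ (k - 1 + 1) := (pow_succ' _ _).symm
    _ ≤ α ^ k := pow_le_pow_of_le_one hα₀ hα₁ (by omega)

lemma pow_le (he : ToggleRecursion α e) (hα₀ : 0 ≤ α) (hα₁ : α ≤ 1) (hA : A ⊆ Icc 1 n)
    (heven : Even #A) : α ^ n ≤ e A := by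
  have hA₀ : 0 ∉ A := fun h => by simpa using hA h
  refine induction_of_zero_notMem (motive := fun A => Even #A → ∀ n, A ⊆ Icc 1 n → α ^ n ≤ e A)
    hA₀ ?_ ?_ heven n hA
  · intro _ n _
    simpa [he.apply_empty] using pow_le_one₀ hα₀ hα₁
  · intro m B hB ih heven n hn
    have hmB : m + 1 ∉ B := fun h => by simpa using hB h
    have hmn : m + 1 ≤ n := (mem_Icc.1 (hn (mem_insert_self _ _))).2
    rw [card_insert_of_notMem hmB, Nat.even_add_one, Nat.not_even_iff_odd] at heven
    have hm : 1 ≤ m := nonempty_Icc.1 ((card_pos.1 heven.pos).mono hB)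
    have havg : α ^ m ≤ 𝔼 i ∈ Icc 1 m, e (B ∆ {i}) :=
      le_expect (nonempty_Icc.2 hm) fun i hi =>
        ih _ (symmDiff_singleton_subset hB hi) (even_card_symmDiff_singleton.2 heven)
          _ (symmDiff_singleton_subset hB hi)
    calc α ^ n ≤ α ^ (m + 1) := pow_le_pow_of_le_one hα₀ hα₁ hmn
      _ = α * α ^ m := pow_succ' _ _
      _ ≤ α * 𝔼 i ∈ Icc 1 m, e (B ∆ {i}) := mul_le_mul_of_nonneg_left havg hα₀
      _ = e (insert (m + 1) B) := (he.apply_insert m B hB).symm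

lemma card_mul_le_sum (he : ToggleRecursion α e) (hα₀ : 0 ≤ α) (hα₁ : α ≤ 1) (hA : A ⊆ Icc 1 n)
    (hodd : Odd #A) {c : ℝ} (hc : ∀ i ∈ A, c ≤ e (A ∆ {i})) :
    #A * c ≤ ∑ i ∈ Icc 1 n, e (A ∆ {i}) :=
  calc #A * c = #A • c := (nsmul_eq_mul _ _).symm
    _ ≤ ∑ i ∈ A, e (A ∆ {i}) := card_nsmul_le_sum _ _ _ hc
    _ ≤ ∑ i ∈ Icc 1 n, e (A ∆ {i}) :=
      sum_le_sum_of_subset_of_nonneg hA fun _ hi _ => (pow_nonneg hα₀ n).trans <|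
        he.pow_le hα₀ hα₁ (symmDiff_singleton_subset hA hi) (even_card_symmDiff_singleton.2 hodd)

-- Among the toggles of the averaging step, only those removing an element of `A` are kept.
lemma pow_mul_prod_le (he : ToggleRecursion α e) (hα₀ : 0 ≤ α) (hα₁ : α ≤ 1)
    (hA : A ⊆ Icc 1 (n + k)) (hk : #A = 2 * k) :
    α ^ k * ∏ j ∈ range k, ((2 * j + 1 : ℝ) / (n + j)) ≤ e A := by
  have hA₀ : 0 ∉ A := fun h => by simpa using hA h
  refine induction_of_zero_notMem (motive := fun A => ∀ k, A ⊆ Icc 1 (n + k) → #A = 2 * k →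
    α ^ k * ∏ j ∈ range k, ((2 * j + 1 : ℝ) / (n + j)) ≤ e A) hA₀ ?_ ?_ k hA hk
  · intro k _ hk
    obtain rfl : k = 0 := by simpa using hk.symm
    simp [he.apply_empty]
  intro m B hB ih k hk hcard
  have hmB : m + 1 ∉ B := fun h => by simpa using hB h
  have hmk : m + 1 ≤ n + k := (mem_Icc.1 (hk (mem_insert_self _ _))).2
  rw [card_insert_of_notMem hmB] at hcard
  obtain ⟨k, rfl⟩ : ∃ j, k = j + 1 := ⟨k - 1, by omega⟩
  have hBcard : #B = 2 * k + 1 := by omega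
  have hm : 1 ≤ m := nonempty_Icc.1 ((card_pos.1 (by omega)).mono hB)
  set c : ℝ := α ^ k * ∏ j ∈ range k, ((2 * j + 1 : ℝ) / (n + j)) with hc
  have hremove : ∀ i ∈ B, c ≤ e (B ∆ {i}) := fun i hi => by
    have hsub := symmDiff_singleton_subset hB (hB hi)
    refine ih _ hsub _ (hsub.trans (Icc_subset_Icc_right (by omega))) ?_
    have := card_symmDiff_singleton_of_mem hi
    omega
  have hsum : (2 * k + 1) * c ≤ ∑ i ∈ Icc 1 m, e (B ∆ {i}) := by
    simpa [hBcard] using he.card_mul_le_sum hα₀ hα₁ hB (by simp [hBcard]) hremove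
  have hmn : (m : ℝ) ≤ n + k := by exact_mod_cast (by omega : m ≤ n + k)
  calc α ^ (k + 1) * ∏ j ∈ range (k + 1), ((2 * j + 1 : ℝ) / (n + j))
      = α * ((2 * k + 1) * c / (n + k)) := by rw [hc, prod_range_succ, pow_succ']; ring
    _ ≤ α * ((∑ i ∈ Icc 1 m, e (B ∆ {i})) / m) := by
      have hc₀ : 0 ≤ (2 * k + 1) * c := by positivity
      have hsum₀ := hc₀.trans hsum
      gcongr
    _ = e (insert (m + 1) B) := by simp [he.apply_insert m B hB, expect_eq_sum_div_card]

end ToggleRecursion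

lemma prod_range_add_eq_two_pow_mul_prod_odd (n : ℕ) :
    ∏ j ∈ range (n + 1), (n + 1 + j) = 2 ^ n * ∏ j ∈ range (n + 1), (2 * j + 1) := by
  induction n with
  | zero => simp
  | succ n ih =>
    have hshift : ∏ j ∈ range (n + 1), (n + 2 + j) = 2 * ∏ j ∈ range (n + 1), (n + 1 + j) := by
      refine Nat.eq_of_mul_eq_mul_left n.succ_pos ?_
      calc (n + 1) * ∏ j ∈ range (n + 1), (n + 2 + j)
          = ∏ j ∈ range (n + 2), (n + 1 + j) := by
            rw [prod_range_succ' _ (n + 1), add_zero, mul_comm]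
            exact congrArg (· * (n + 1)) (prod_congr rfl fun j _ => by ring)
        _ = (n + 1) * (2 * ∏ j ∈ range (n + 1), (n + 1 + j)) := by rw [prod_range_succ]; ring
    rw [prod_range_succ, hshift, ih, prod_range_succ _ (n + 1)]
    ring

lemma half_pow_le_prod_odd_div (n : ℕ) :
    (1 / 2 : ℝ) ^ n ≤ ∏ j ∈ range n, ((2 * j + 1 : ℝ) / (n + j)) := by
  rcases n with _ | n
  · simp
  have hprod : ∏ j ∈ range (n + 1), (((n + 1 : ℕ) : ℝ) + j)
      = 2 ^ n * ∏ j ∈ range (n + 1), (2 * (j : ℝ) + 1) := by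
    exact_mod_cast prod_range_add_eq_two_pow_mul_prod_odd n
  have hodd : 0 < ∏ j ∈ range (n + 1), (2 * (j : ℝ) + 1) := prod_pos fun j _ => by positivity
  calc (1 / 2 : ℝ) ^ (n + 1) ≤ (1 / 2) ^ n :=
        pow_le_pow_of_le_one (by norm_num) (by norm_num) n.le_succ
    _ = ∏ j ∈ range (n + 1), ((2 * j + 1 : ℝ) / ((n + 1 : ℕ) + j)) := by
      rw [prod_div_distrib, hprod, div_mul_cancel_right₀ hodd.ne', one_div, inv_pow]

lemma exp_neg_two_mul_one_sub_le {x : ℝ} (hx : 1 / 2 ≤ x) (hx₁ : x ≤ 1) :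
    Real.exp (-2 * (1 - x)) ≤ x := by
  have hx₀ : 0 < x := by linarith
  rw [← Real.le_log_iff_exp_le hx₀]
  refine le_trans ?_ (Real.one_sub_inv_le_log_of_pos hx₀)
  have hinv : x⁻¹ ≤ 2 := (inv_le_comm₀ hx₀ two_pos).2 (by linarith)
  calc -2 * (1 - x) ≤ -x⁻¹ * (1 - x) := by nlinarith
    _ = 1 - x⁻¹ := by field_simp; ring

lemma ToggleRecursion.exp_mul_pow_le {α : ℝ} {e : Finset ℕ → ℝ} (he : ToggleRecursion α e)
    (hα₀ : 0 ≤ α) (hα₁ : α ≤ 1) (n : ℕ) :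
    Real.exp (-2 * (1 - α) * n) * α ^ n ≤ e (Icc 1 (2 * n)) := by
  rw [mul_comm _ (n : ℝ), Real.exp_nat_mul]
  have hexp := (Real.exp_pos (-2 * (1 - α))).le
  rcases le_total α (1 / 2) with hα | hα
  · have hhalf : Real.exp (-2 * (1 - α)) ≤ 1 / 2 :=
      (Real.exp_le_exp.2 (by linarith)).trans (exp_neg_two_mul_one_sub_le le_rfl (by norm_num))
    calc Real.exp (-2 * (1 - α)) ^ n * α ^ n ≤ (1 / 2) ^ n * α ^ n :=
          mul_le_mul_of_nonneg_right (pow_le_pow_left₀ hexp hhalf n) (pow_nonneg hα₀ n)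
      _ ≤ α ^ n * ∏ j ∈ range n, ((2 * j + 1 : ℝ) / (n + j)) := by
        rw [mul_comm]
        exact mul_le_mul_of_nonneg_left (half_pow_le_prod_odd_div n) (pow_nonneg hα₀ n)
      _ ≤ e (Icc 1 (2 * n)) := he.pow_mul_prod_le hα₀ hα₁ (by rw [two_mul]) (by simp)
  · calc Real.exp (-2 * (1 - α)) ^ n * α ^ n ≤ α ^ n * α ^ n :=
          mul_le_mul_of_nonneg_right
            (pow_le_pow_left₀ hexp (exp_neg_two_mul_one_sub_le hα hα₁) n) (pow_nonneg hα₀ n)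
      _ = α ^ (2 * n) := by rw [two_mul, pow_add]
      _ ≤ e (Icc 1 (2 * n)) := he.pow_le hα₀ hα₁ Subset.rfl (by simp)

/-! ### Random indices and `σ`-algebras generated by subfamilies -/

section RandomIndex

variable {Ω κ β : Type*} [MeasurableSpace Ω] [MeasurableSpace κ] {s : Finset κ} {I : Ω → κ}

lemma setIntegral_preimage_eq_mul_of_indepFun {P : Measure Ω} {Y : Ω → ℝ} {B : Set κ}
    (hI : Measurable I) (hB : MeasurableSet B) (hY : AEMeasurable Y P) (hind : IndepFun I Y P) :
    ∫ ω in I ⁻¹' B, Y ω ∂P = P.real (I ⁻¹' B) * ∫ ω, Y ω ∂P :=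
  Indep.setIntegral_eq_mul (f := id) hI.comap_le ((IndepFun_iff_Indep _ _ _).1 hind) hY ⟨B, hB, rfl⟩
    aestronglyMeasurable_id

variable [MeasurableSingletonClass κ]

lemma measurable_random_index [MeasurableSpace β] {Y : κ → Ω → β} (hI : Measurable I)
    (hs : ∀ ω, I ω ∈ s) (hY : ∀ k ∈ s, Measurable (Y k)) : Measurable fun ω => Y (I ω) ω := by
  intro B hB
  have hpreimage : (fun ω => Y (I ω) ω) ⁻¹' B = ⋃ k ∈ s, I ⁻¹' {k} ∩ Y k ⁻¹' B := by
    ext ω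
    simpa using fun _ => hs ω
  rw [hpreimage]
  exact s.measurableSet_biUnion fun k hk => (hI (measurableSet_singleton k)).inter (hY k hk hB)

lemma integral_random_index {P : Measure Ω} {Y : κ → Ω → ℝ} (hI : Measurable I)
    (hs : ∀ ω, I ω ∈ s) (hY : ∀ k ∈ s, Integrable (Y k) P)
    (hind : ∀ k ∈ s, IndepFun I (Y k) P) :
    ∫ ω, Y (I ω) ω ∂P = ∑ k ∈ s, P.real (I ⁻¹' {k}) * ∫ ω, Y k ω ∂P := by
  classical
  have hmeas (k : κ) : MeasurableSet (I ⁻¹' {k}) := hI (measurableSet_singleton k)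
  calc ∫ ω, Y (I ω) ω ∂P = ∫ ω, ∑ k ∈ s, (I ⁻¹' {k}).indicator (Y k) ω ∂P := by
        refine integral_congr_ae (.of_forall fun ω => ?_)
        simp [Set.indicator_apply, hs ω]
    _ = ∑ k ∈ s, ∫ ω in I ⁻¹' {k}, Y k ω ∂P := by
      rw [integral_finsetSum _ fun k hk => (hY k hk).indicator (hmeas k)]
      exact sum_congr rfl fun k _ => integral_indicator (hmeas k)
    _ = ∑ k ∈ s, P.real (I ⁻¹' {k}) * ∫ ω, Y k ω ∂P :=
      sum_congr rfl fun k hk => setIntegral_preimage_eq_mul_of_indepFun hI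
        (measurableSet_singleton k) (hY k hk).aemeasurable (hind k hk)

end RandomIndex

section SigmaAlgebraOn

variable {Ω ι β γ δ : Type*} [MeasurableSpace β] [MeasurableSpace γ] [MeasurableSpace δ]
  {f : ι → Ω → β} {S T : Set ι} {i : ι}

/-- The `σ`-algebra generated by the variables `f i` with `i ∈ S`. -/
abbrev sigmaAlgebraOn (f : ι → Ω → β) (S : Set ι) : MeasurableSpace Ω :=
  ⨆ i ∈ S, MeasurableSpace.comap (f i) inferInstance

lemma sigmaAlgebraOn_mono (hST : S ⊆ T) : sigmaAlgebraOn f S ≤ sigmaAlgebraOn f T :=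
  biSup_mono hST

lemma sigmaAlgebraOn_le [mΩ : MeasurableSpace Ω] (hf : ∀ i, Measurable (f i)) :
    sigmaAlgebraOn f S ≤ mΩ :=
  iSup₂_le fun i _ => (hf i).comap_le

lemma measurable_sigmaAlgebraOn (hi : i ∈ S) : Measurable[sigmaAlgebraOn f S] (f i) :=
  (comap_measurable (f i)).mono (le_iSup₂ (f := fun i (_ : i ∈ S) =>
    MeasurableSpace.comap (f i) inferInstance) i hi) le_rfl

lemma indepFun_of_measurable_sigmaAlgebraOn [MeasurableSpace Ω] {P : Measure Ω}
    (hf : ∀ i, Measurable (f i)) (hind : iIndepFun f P) (hST : Disjoint S T)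
    {Y : Ω → γ} {Z : Ω → δ} (hY : Measurable[sigmaAlgebraOn f S] Y)
    (hZ : Measurable[sigmaAlgebraOn f T] Z) : IndepFun Y Z P :=
  (IndepFun_iff_Indep _ _ _).2 <| indep_of_indep_of_le_left (indep_of_indep_of_le_right
    (indep_iSup_of_disjoint (fun i => (hf i).comap_le) hind.iIndep hST) hZ.comap_le) hY.comap_le

end SigmaAlgebraOn

lemma measurableEmbedding_inl {β γ : Type*} [MeasurableSpace β] [MeasurableSpace γ] :
    MeasurableEmbedding (Sum.inl : β → β ⊕ γ) :=
  ⟨Sum.inl_injective, measurable_inl, fun _ => MeasurableSet.inl_image⟩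

lemma measurableEmbedding_inr {β γ : Type*} [MeasurableSpace β] [MeasurableSpace γ] :
    MeasurableEmbedding (Sum.inr : γ → β ⊕ γ) :=
  ⟨Sum.inr_injective, measurable_inr, fun _ => measurableSet_inr_image.2⟩

/-! ### Correlations of the steps of a reinforced walk -/

section Pathwise

/-- The product over `i ∈ A` of the values of the observable `χ` at the steps `X i`. -/
def stepProd {Ω V : Type*} (χ : V → ℝ) (X : ℕ → Ω → V) (A : Finset ℕ) (ω : Ω) : ℝ :=
  ∏ i ∈ A, χ (X i ω)

/-- The pathwise rule producing the steps `X` of the usual reinforced walk from its driving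
randomness. -/
structure IsStepSequence {Ω V : Type*} (ξ : ℕ → Ω → Bool) (u : ℕ → Ω → ℕ) (g X : ℕ → Ω → V) :
    Prop where
  index_mem : ∀ n, 2 ≤ n → ∀ ω, u n ω ∈ Ico 1 n
  first : ∀ ω, X 1 ω = g 1 ω
  step : ∀ n, 2 ≤ n → ∀ ω, X n ω = if ξ n ω then X (u n ω) ω else g n ω

variable {Ω V : Type*} {ξ : ℕ → Ω → Bool} {u : ℕ → Ω → ℕ} {g X : ℕ → Ω → V} {χ : V → ℝ}
  {A : Finset ℕ} {m n : ℕ} {ω : Ω}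

lemma abs_stepProd (hχ : ∀ x, |χ x| = 1) : |stepProd χ X A ω| = 1 := by
  simp [stepProd, abs_prod, hχ]

lemma IsStepSequence.stepProd_insert (hX : IsStepSequence ξ u g X) (hχ : ∀ x, |χ x| = 1)
    (hm : 1 ≤ m) (hA : A ⊆ Icc 1 m) :
    stepProd χ X (insert (m + 1) A) ω =
      if ξ (m + 1) ω then stepProd χ X (A ∆ {u (m + 1) ω}) ω
      else χ (g (m + 1) ω) * stepProd χ X A ω := by
  have hmA : m + 1 ∉ A := fun h => by simpa using hA h
  have hsq (x : V) : χ x * χ x = 1 := by rw [← abs_mul_abs_self, hχ, one_mul]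
  simp only [stepProd, prod_insert hmA, hX.step (m + 1) (by omega) ω]
  split_ifs
  · exact (prod_symmDiff_singleton (f := fun i => χ (X i ω)) (hsq _)).symm
  · rfl

/-- The time at which a driving variable is used, the index type `ℕ ⊕ ℕ ⊕ ℕ` of `fam` being that
of the three sequences `ξ`, `u` and `g`. -/
def time : ℕ ⊕ ℕ ⊕ ℕ → ℕ :=
  Sum.elim id (Sum.elim id id)

variable [MeasurableSpace V] {S : Set (ℕ ⊕ ℕ ⊕ ℕ)}

/-- The `σ`-algebra of the driving randomness used up to time `n`. -/
abbrev past (ξ : ℕ → Ω → Bool) (u : ℕ → Ω → ℕ) (g : ℕ → Ω → V) (n : ℕ) : MeasurableSpace Ω :=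
  sigmaAlgebraOn (fam ξ u g) {i | time i ≤ n}

lemma past_mono (hmn : m ≤ n) : past ξ u g m ≤ past ξ u g n :=
  sigmaAlgebraOn_mono fun _ hi => le_trans hi hmn

lemma measurable_reinforcement (hn : .inl n ∈ S) :
    Measurable[sigmaAlgebraOn (fam ξ u g) S] (ξ n) :=
  measurableEmbedding_inl.measurable_comp_iff.1 (measurable_sigmaAlgebraOn (f := fam ξ u g) hn)

lemma measurable_copied_index (hn : .inr (.inl n) ∈ S) :
    Measurable[sigmaAlgebraOn (fam ξ u g) S] (u n) :=
  measurableEmbedding_inl.measurable_comp_iff.1 <| measurableEmbedding_inr.measurable_comp_iff.1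
    (measurable_sigmaAlgebraOn (f := fam ξ u g) hn)

lemma measurable_fresh_step (hn : .inr (.inr n) ∈ S) :
    Measurable[sigmaAlgebraOn (fam ξ u g) S] (g n) :=
  measurableEmbedding_inr.measurable_comp_iff.1 <| measurableEmbedding_inr.measurable_comp_iff.1
    (measurable_sigmaAlgebraOn (f := fam ξ u g) hn)

lemma IsStepSequence.measurable_past (hX : IsStepSequence ξ u g X) (hn : 1 ≤ n) :
    Measurable[past ξ u g n] (X n) := by
  induction n using Nat.strong_induction_on with
  | _ n ih =>
    let := past ξ u g n
    have hfresh : Measurable (g n) := measurable_fresh_step n.le_refl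
    rcases hn.eq_or_lt with rfl | hn
    · rwa [funext hX.first]
    have hcopy : Measurable fun ω => X (u n ω) ω :=
      measurable_random_index (measurable_copied_index n.le_refl) (hX.index_mem n hn) fun k hk =>
        have hk := mem_Ico.1 hk
        (ih k hk.2 hk.1).mono (past_mono hk.2.le) le_rfl
    have hreinforced : MeasurableSet {ω | ξ n ω = true} :=
      measurable_reinforcement n.le_refl (measurableSet_singleton true)
    rw [funext (hX.step n hn)]
    exact hcopy.ite hreinforced hfresh

lemma IsStepSequence.measurable_stepProd (hX : IsStepSequence ξ u g X) (hχ : Measurable χ)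
    (hA : A ⊆ Icc 1 m) : Measurable[past ξ u g m] (stepProd χ X A) := by
  let := past ξ u g m
  refine Finset.measurable_fun_prod A fun i hi => hχ.comp ?_
  have hi := mem_Icc.1 (hA hi)
  exact (hX.measurable_past hi.1).mono (past_mono hi.2) le_rfl

lemma past_le_sigmaAlgebraOn_compl {i : ℕ ⊕ ℕ ⊕ ℕ} (hi : n < time i) :
    past ξ u g n ≤ sigmaAlgebraOn (fam ξ u g) {i}ᶜ :=
  sigmaAlgebraOn_mono fun _ hj hji => (hi.trans_le (hji ▸ hj)).false

lemma IsStepSequence.measurable_stepProd_toggle (hX : IsStepSequence ξ u g X) (hχ : Measurable χ)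
    (hm : 1 ≤ m) (hA : A ⊆ Icc 1 m) :
    Measurable[sigmaAlgebraOn (fam ξ u g) {.inl (m + 1)}ᶜ]
      fun ω => stepProd χ X (A ∆ {u (m + 1) ω}) ω := by
  let := sigmaAlgebraOn (fam ξ u g) {.inl (m + 1)}ᶜ
  have hindex : Measurable (u (m + 1)) := measurable_copied_index (by simp)
  refine measurable_random_index (Y := fun k => stepProd χ X (A ∆ {k})) hindex
    (hX.index_mem (m + 1) (by omega)) fun k hk => ?_
  exact (hX.measurable_stepProd hχ (symmDiff_singleton_subset hA hk)).mono
    (past_le_sigmaAlgebraOn_compl m.lt_succ_self) le_rfl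

lemma IsStepSequence.measurable_fresh_mul_stepProd (hX : IsStepSequence ξ u g X)
    (hχ : Measurable χ) (hA : A ⊆ Icc 1 m) :
    Measurable[sigmaAlgebraOn (fam ξ u g) {.inl (m + 1)}ᶜ]
      fun ω => χ (g (m + 1) ω) * stepProd χ X A ω :=
  let := sigmaAlgebraOn (fam ξ u g) {.inl (m + 1)}ᶜ
  (hχ.comp (measurable_fresh_step (by simp))).mul <|
    (hX.measurable_stepProd hχ hA).mono (past_le_sigmaAlgebraOn_compl m.lt_succ_self) le_rfl

end Pathwise

section Walk

variable {Ω V : Type*} [MeasurableSpace Ω] [MeasurableSpace V] {P : Measure Ω} {μ : Measure V}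
  {α : ℝ} {ξ : ℕ → Ω → Bool} {u : ℕ → Ω → ℕ} {g X : ℕ → Ω → V} {χ : V → ℝ} {A : Finset ℕ} {m n : ℕ}

lemma IsSRRWAdd.exists_isStepSequence (hX : IsSRRWAdd P α μ X) :
    ∃ ξ u g, IsDriving P α μ ξ u g ∧ IsStepSequence ξ u g X := by
  obtain ⟨ξ, u, g, hD, -, -, hfirst, hstep⟩ := hX
  exact ⟨ξ, u, g, hD, fun n hn ω => mem_Ico.2 (hD.u_range n hn ω), hfirst, hstep⟩

lemma IsDriving.measurable_fam (hD : IsDriving P α μ ξ u g) :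
    ∀ i, Measurable (fam ξ u g i)
  | .inl n => measurable_inl.comp (hD.meas_ξ n)
  | .inr (.inl n) => measurable_inr.comp (measurable_inl.comp (hD.meas_u n))
  | .inr (.inr n) => measurable_inr.comp (measurable_inr.comp (hD.meas_g n))

lemma IsDriving.past_le (hD : IsDriving P α μ ξ u g) : past ξ u g n ≤ ‹MeasurableSpace Ω› :=
  sigmaAlgebraOn_le hD.measurable_fam

lemma IsDriving.indepFun {γ δ : Type*} [MeasurableSpace γ] [MeasurableSpace δ]
    (hD : IsDriving P α μ ξ u g) {S T : Set (ℕ ⊕ ℕ ⊕ ℕ)} (hST : Disjoint S T)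
    {Y : Ω → γ} {Z : Ω → δ} (hY : Measurable[sigmaAlgebraOn (fam ξ u g) S] Y)
    (hZ : Measurable[sigmaAlgebraOn (fam ξ u g) T] Z) : IndepFun Y Z P :=
  indepFun_of_measurable_sigmaAlgebraOn hD.measurable_fam hD.indep hST hY hZ

lemma disjoint_singleton_time_le {i : ℕ ⊕ ℕ ⊕ ℕ} (hi : n < time i) :
    Disjoint {i} {j | time j ≤ n} :=
  Set.disjoint_singleton_left.2 (not_le.2 hi)

lemma IsStepSequence.integrable_stepProd [IsFiniteMeasure P] (hX : IsStepSequence ξ u g X)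
    (hD : IsDriving P α μ ξ u g) (hχ : Measurable χ) (habs : ∀ x, |χ x| = 1)
    (hA : A ⊆ Icc 1 m) : Integrable (stepProd χ X A) P :=
  .of_bound ((hX.measurable_stepProd hχ hA).mono hD.past_le le_rfl).aestronglyMeasurable 1
    (.of_forall fun _ => (abs_stepProd habs).le)

/-- The joint moment of the observable `χ` at the steps `X i`, `i ∈ A`. -/
noncomputable def correlation (P : Measure Ω) (χ : V → ℝ) (X : ℕ → Ω → V) (A : Finset ℕ) : ℝ :=
  ∫ ω, stepProd χ X A ω ∂P

lemma IsDriving.prob_copied_index (hD : IsDriving P α μ ξ u g) {k : ℕ} (hk : k ∈ Icc 1 m) :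
    P.real (u (m + 1) ⁻¹' {k}) = (m : ℝ)⁻¹ := by
  obtain ⟨h₁, h₂⟩ := mem_Icc.1 hk
  have hlaw := hD.u_law (m + 1) (by omega) k h₁ (by omega)
  simp only [measureReal_def, Set.preimage, Set.mem_singleton_iff, hlaw]
  simp

lemma IsStepSequence.integral_stepProd_toggle [IsFiniteMeasure P] (hX : IsStepSequence ξ u g X)
    (hD : IsDriving P α μ ξ u g) (hχ : Measurable χ) (habs : ∀ x, |χ x| = 1) (hm : 1 ≤ m)
    (hA : A ⊆ Icc 1 m) :
    ∫ ω, stepProd χ X (A ∆ {u (m + 1) ω}) ω ∂P = 𝔼 k ∈ Icc 1 m, correlation P χ X (A ∆ {k}) := by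
  have hmem (ω : Ω) : u (m + 1) ω ∈ Icc 1 m := hX.index_mem (m + 1) (by omega) ω
  have hsub {k : ℕ} (hk : k ∈ Icc 1 m) := symmDiff_singleton_subset hA hk
  rw [integral_random_index (Y := fun k => stepProd χ X (A ∆ {k})) (hD.meas_u (m + 1)) hmem
    (fun k hk => hX.integrable_stepProd hD hχ habs (hsub hk))
    (fun k hk => hD.indepFun (disjoint_singleton_time_le m.lt_succ_self)
      (measurable_copied_index (Set.mem_singleton _)) (hX.measurable_stepProd hχ (hsub hk))),
    sum_congr rfl fun k hk => by rw [hD.prob_copied_index hk], ← mul_sum,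
    expect_eq_sum_div_card, Nat.card_Icc, Nat.add_sub_cancel, div_eq_inv_mul]
  rfl

lemma IsDriving.integral_fresh_step (hD : IsDriving P α μ ξ u g) (hχ : Measurable χ)
    (hn : 1 ≤ n) : ∫ ω, χ (g n ω) ∂P = ∫ x, χ x ∂μ := by
  rw [← hD.g_law n hn, integral_map (hD.meas_g n).aemeasurable hχ.aestronglyMeasurable]

lemma IsStepSequence.integral_fresh_mul_stepProd (hX : IsStepSequence ξ u g X)
    (hD : IsDriving P α μ ξ u g) (hχ : Measurable χ) (hA : A ⊆ Icc 1 m) :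
    ∫ ω, χ (g (m + 1) ω) * stepProd χ X A ω ∂P = (∫ x, χ x ∂μ) * correlation P χ X A := by
  have hfresh : Measurable[sigmaAlgebraOn (fam ξ u g) {.inr (.inr (m + 1))}] (χ ∘ g (m + 1)) :=
    hχ.comp (measurable_fresh_step (Set.mem_singleton _))
  have hprod := hX.measurable_stepProd hχ hA
  have hind : IndepFun (χ ∘ g (m + 1)) (stepProd χ X A) P :=
    hD.indepFun (disjoint_singleton_time_le m.lt_succ_self) hfresh hprod
  rw [← hD.integral_fresh_step hχ m.succ_pos]
  exact hind.integral_fun_mul_eq_mul_integral (hχ.comp (hD.meas_g _)).aestronglyMeasurable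
    (hprod.mono hD.past_le le_rfl).aestronglyMeasurable

lemma IsDriving.prob_reinforcement (hD : IsDriving P α μ ξ u g) (hα : 0 ≤ α) (hn : 2 ≤ n) :
    P.real (ξ n ⁻¹' {true}) = α := by
  simp only [measureReal_def, Set.preimage, Set.mem_singleton_iff, hD.ξ_law n hn,
    ENNReal.toReal_ofReal hα]

lemma IsStepSequence.correlation_insert [IsProbabilityMeasure P] (hX : IsStepSequence ξ u g X)
    (hD : IsDriving P α μ ξ u g) (hα : 0 ≤ α) (hχ : Measurable χ) (habs : ∀ x, |χ x| = 1)
    (hmean : ∫ x, χ x ∂μ = 0) (hm : 1 ≤ m) (hA : A ⊆ Icc 1 m) :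
    correlation P χ X (insert (m + 1) A) = α * 𝔼 k ∈ Icc 1 m, correlation P χ X (A ∆ {k}) := by
  let Y (b : Bool) (ω : Ω) : ℝ :=
    if b then stepProd χ X (A ∆ {u (m + 1) ω}) ω else χ (g (m + 1) ω) * stepProd χ X A ω
  have hY (b : Bool) : Measurable[sigmaAlgebraOn (fam ξ u g) {.inl (m + 1)}ᶜ] (Y b) :=
    b.casesOn (hX.measurable_fresh_mul_stepProd hχ hA) (hX.measurable_stepProd_toggle hχ hm hA)
  have hbound (b : Bool) (ω : Ω) : |Y b ω| ≤ 1 := by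
    cases b <;> simp [Y, abs_mul, abs_stepProd habs, habs]
  calc correlation P χ X (insert (m + 1) A) = ∫ ω, Y (ξ (m + 1) ω) ω ∂P :=
        integral_congr_ae (.of_forall fun _ => hX.stepProd_insert habs hm hA)
    _ = ∑ b, P.real (ξ (m + 1) ⁻¹' {b}) * ∫ ω, Y b ω ∂P :=
      integral_random_index (hD.meas_ξ _) (fun _ => mem_univ _)
        (fun b _ => .of_bound ((hY b).mono (sigmaAlgebraOn_le hD.measurable_fam)
          le_rfl).aestronglyMeasurable 1 (.of_forall (hbound b)))
        (fun b _ => hD.indepFun disjoint_compl_right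
          (measurable_reinforcement (Set.mem_singleton _)) (hY b))
    _ = α * ∫ ω, stepProd χ X (A ∆ {u (m + 1) ω}) ω ∂P := by
      simp [Y, hD.prob_reinforcement hα (by omega : 2 ≤ m + 1),
        hX.integral_fresh_mul_stepProd hD hχ hA, hmean]
    _ = α * 𝔼 k ∈ Icc 1 m, correlation P χ X (A ∆ {k}) := by
      rw [hX.integral_stepProd_toggle hD hχ habs hm hA]

lemma IsSRRWAdd.toggleRecursion [IsProbabilityMeasure P] (hX : IsSRRWAdd P α μ X) (hα : 0 ≤ α)
    (hχ : Measurable χ) (habs : ∀ x, |χ x| = 1) (hmean : ∫ x, χ x ∂μ = 0) :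
    ToggleRecursion α (correlation P χ X) := by
  obtain ⟨ξ, u, g, hD, hX⟩ := hX.exists_isStepSequence
  refine ⟨by simp [correlation, stepProd], fun m A hA => ?_⟩
  rcases m.eq_zero_or_pos with rfl | hm
  · obtain rfl : A = ∅ := subset_empty.1 hA
    simp [correlation, stepProd, hX.first, hD.integral_fresh_step hχ le_rfl, hmean]
  · exact hX.correlation_insert hD hα hχ habs hmean hm hA

end Walk

lemma pos_eq_sum_Icc {Ω V : Type*} [AddCommGroup V] (X : ℕ → Ω → V) (n : ℕ) (ω : Ω) :
    pos X n ω = ∑ i ∈ Icc 1 n, X i ω := by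
  rw [pos, range_eq_Ico, sum_Ico_add' (fun i => X i ω), zero_add]
  rfl

lemma stepProd_addChar {Ω V : Type*} [AddCommGroup V] (χ : AddChar V ℝ)
    (X : ℕ → Ω → V) (n : ℕ) (ω : Ω) : stepProd χ X (Icc 1 n) ω = χ (pos X n ω) := by
  rw [pos_eq_sum_Icc]
  exact (map_prod χ.toMonoidHom (fun i => Multiplicative.ofAdd (X i ω)) (Icc 1 n)).symm

lemma IsSRRWAdd.measurable_pos {Ω V : Type*} [MeasurableSpace Ω] [AddCommGroup V]
    [MeasurableSpace V] [MeasurableAdd₂ V] {P : Measure Ω} {μ : Measure V} {α : ℝ}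
    {X : ℕ → Ω → V} (hX : IsSRRWAdd P α μ X) (n : ℕ) : Measurable (pos X n) := by
  obtain ⟨ξ, u, g, hD, hX⟩ := hX.exists_isStepSequence
  exact Finset.measurable_fun_sum _ fun k _ =>
    (hX.measurable_past k.succ_pos).mono hD.past_le le_rfl

section ZModTwo

/-- The sign character `x ↦ (-1) ^ x` of `ℤ/2ℤ`. -/
def signChar : AddChar (ZMod 2) ℝ :=
  AddChar.zmodChar 2 (ζ := -1) (by norm_num)

lemma signChar_one : signChar 1 = -1 := by
  simp [signChar, AddChar.zmodChar_apply, ZMod.val_one]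

lemma abs_signChar (x : ZMod 2) : |signChar x| = 1 := by
  simp [signChar, AddChar.zmodChar_apply]

variable [MeasurableSpace (ZMod 2)] [MeasurableSingletonClass (ZMod 2)]

lemma integral_signChar {μ : Measure (ZMod 2)} [IsProbabilityMeasure μ] :
    ∫ x, signChar x ∂μ = 2 * μ.real {0} - 1 := by
  have hsum (f : ZMod 2 → ℝ) : ∑ x, f x = f 0 + f 1 := Fin.sum_univ_two f
  have hmass : μ.real {0} + μ.real {1} = 1 := by
    rw [← hsum fun x => μ.real {x}, sum_measureReal_singleton, coe_univ, probReal_univ]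
  rw [integral_fintype .of_finite, hsum, AddChar.map_zero_eq_one, signChar_one, smul_eq_mul,
    smul_eq_mul]
  linarith

variable {Ω : Type*} [MeasurableSpace Ω] {P : Measure Ω} [IsProbabilityMeasure P]
  {α : ℝ} {μ : Measure (ZMod 2)} {X : ℕ → Ω → ZMod 2}

lemma IsSRRWAdd.correlation_signChar (hX : IsSRRWAdd P α μ X) (n : ℕ) :
    correlation P signChar X (Icc 1 n) = 2 * (P {ω | pos X n ω = 0}).toReal - 1 := by
  have hpos := hX.measurable_pos n
  have := Measure.isProbabilityMeasure_map hpos.aemeasurable (μ := P)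
  calc correlation P signChar X (Icc 1 n) = ∫ ω, signChar (pos X n ω) ∂P :=
        integral_congr_ae (.of_forall (stepProd_addChar signChar X n))
    _ = ∫ x, signChar x ∂P.map (pos X n) :=
      (integral_map hpos.aemeasurable (measurable_of_finite _).aestronglyMeasurable).symm
    _ = 2 * (P.map (pos X n)).real {0} - 1 := integral_signChar
    _ = 2 * (P {ω | pos X n ω = 0}).toReal - 1 := by
      rw [map_measureReal_apply hpos (measurableSet_singleton 0)]
      rfl

lemma IsSRRWAdd.toggleRecursion_signChar [IsProbabilityMeasure μ] (hX : IsSRRWAdd P α μ X)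
    (hα : 0 ≤ α) (hμ : μ {0} = 1 / 2) : ToggleRecursion α (correlation P signChar X) :=
  hX.toggleRecursion hα (measurable_of_finite _) abs_signChar
    (by simp [integral_signChar, measureReal_def, hμ])

lemma IsSRRWAdd.prob_pos_eq_zero_of_odd [IsProbabilityMeasure μ] (hX : IsSRRWAdd P α μ X)
    (hα : 0 ≤ α) (hμ : μ {0} = 1 / 2) {n : ℕ} (hn : Odd n) : P {ω | pos X n ω = 0} = 1 / 2 := by
  have hcorr := (hX.toggleRecursion_signChar hα hμ).eq_zero_of_odd_card
    (by simp : 0 ∉ Icc 1 n) (by simpa using hn)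
  rw [hX.correlation_signChar n] at hcorr
  rw [← ENNReal.ofReal_toReal (measure_ne_top P _), (by linarith : (P _).toReal = 1 / 2)]
  simp

end ZModTwo

/-! ### Logarithmic asymptotics -/

lemma tendsto_log_div_log_of_isTheta_rpow {ι : Type*} {l : Filter ι} {x f : ι → ℝ} {r : ℝ}
    (hx : Tendsto x l (𝓝[>] 0)) (hf : f =Θ[l] fun i => x i ^ r) :
    Tendsto (fun i => Real.log (f i) / Real.log (x i)) l (𝓝 r) := by
  obtain ⟨C, hC, hup⟩ := hf.1.exists_pos
  obtain ⟨c, hc, hlow⟩ := hf.2.exists_pos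
  have hlog : Tendsto (fun i => Real.log (x i)) l atBot := Real.tendsto_log_nhdsGT_zero.comp hx
  have hlim (b : ℝ) : Tendsto (fun i => r + b / Real.log (x i)) l (𝓝 r) := by
    simpa using tendsto_const_nhds.add (hlog.const_div_atBot b)
  have hpos : ∀ᶠ i in l, 0 < x i := (tendsto_nhdsWithin_iff.1 hx).2
  refine tendsto_of_tendsto_of_tendsto_of_le_of_le' (hlim (Real.log C)) (hlim (-Real.log c)) ?_ ?_
  · filter_upwards [hpos, hlog.eventually_lt_atBot 0, hup.bound, hlow.bound] with i hi hneg hu hl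
    have hrpow : 0 < ‖x i ^ r‖ := norm_pos_iff.2 (Real.rpow_pos_of_pos hi r).ne'
    have hfi : 0 < ‖f i‖ := pos_of_mul_pos_right (hrpow.trans_le hl) hc.le
    have := Real.log_le_log hfi hu
    rw [Real.log_mul hC.ne' hrpow.ne', Real.norm_eq_abs, Real.norm_eq_abs, Real.log_abs,
      Real.log_abs, Real.log_rpow hi] at this
    rw [le_div_iff_of_neg hneg, add_mul, div_mul_cancel₀ _ hneg.ne]
    linarith
  · filter_upwards [hpos, hlog.eventually_lt_atBot 0, hlow.bound] with i hi hneg hl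
    have hrpow : 0 < ‖x i ^ r‖ := norm_pos_iff.2 (Real.rpow_pos_of_pos hi r).ne'
    have hfi : 0 < ‖f i‖ := pos_of_mul_pos_right (hrpow.trans_le hl) hc.le
    have := Real.log_le_log hrpow hl
    rw [Real.log_mul hc.ne' hfi.ne', Real.norm_eq_abs, Real.norm_eq_abs, Real.log_abs,
      Real.log_abs, Real.log_rpow hi] at this
    rw [div_le_iff_of_neg hneg, add_mul, div_mul_cancel₀ _ hneg.ne]
    linarith

section Limits

variable {C : ℝ} {n : ℕ} {b : ℝ → ℝ}

lemma tendsto_log_div_log_of_exp_mul_pow_le_of_le_pow (hC : 0 ≤ C)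
    (hlow : ∀ α ∈ Set.Ioo (0 : ℝ) 1, Real.exp (-C * (1 - α) * n) * α ^ n ≤ b α)
    (hup : ∀ α ∈ Set.Ioo (0 : ℝ) 1, b α ≤ α ^ n) :
    Tendsto (fun α => Real.log (b α) / Real.log α) (𝓝[>] 0) (𝓝 n) := by
  have hmem : ∀ᶠ α : ℝ in 𝓝[>] 0, α ∈ Set.Ioo (0 : ℝ) 1 := Ioo_mem_nhdsGT one_pos
  refine tendsto_log_div_log_of_isTheta_rpow tendsto_id ⟨?_, ?_⟩
  · refine .of_bound' ?_
    filter_upwards [hmem] with α hα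
    have hpow : 0 < α ^ n := pow_pos hα.1 n
    have hb : 0 ≤ b α := (mul_nonneg (Real.exp_pos _).le hpow.le).trans (hlow α hα)
    simp only [Real.rpow_natCast]
    rw [Real.norm_of_nonneg hb, Real.norm_of_nonneg hpow.le]
    exact hup α hα
  · refine .of_bound (Real.exp (C * n)) ?_
    filter_upwards [hmem] with α hα
    have hpow : 0 < α ^ n := pow_pos hα.1 n
    simp only [Real.rpow_natCast, Real.norm_of_nonneg hpow.le]
    refine le_trans ?_ (mul_le_mul_of_nonneg_left (Real.le_norm_self _) (Real.exp_pos _).le)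
    calc α ^ n ≤ Real.exp (C * n) * (Real.exp (-C * (1 - α) * n) * α ^ n) := by
          rw [← mul_assoc, ← Real.exp_add]
          refine le_mul_of_one_le_left hpow.le (Real.one_le_exp ?_)
          have : 0 ≤ C * n * α := by have := hα.1.le; positivity
          linarith
      _ ≤ Real.exp (C * n) * b α := by gcongr; exact hlow α hα

lemma one_sub_exp_mul_pow_le {α : ℝ} (hC : 0 ≤ C) (hα₀ : 0 ≤ α) (hα₁ : α ≤ 1) (n : ℕ) :
    1 - Real.exp (-C * (1 - α) * n) * α ^ n ≤ (C + 1) * n * (1 - α) := by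
  set E := Real.exp (-C * (1 - α) * n)
  have hsub : 0 ≤ 1 - α := sub_nonneg.2 hα₁
  have hexp : 1 - E ≤ C * (1 - α) * n := by
    linarith [Real.add_one_le_exp (-C * (1 - α) * n)]
  have hexp_le : E ≤ 1 := by
    refine Real.exp_le_one_iff.2 ?_
    linarith [mul_nonneg (mul_nonneg hC hsub) n.cast_nonneg]
  have hbernoulli : 1 - α ^ n ≤ n * (1 - α) := by
    have := one_add_mul_le_pow (a := α - 1) (by linarith) n
    rw [add_sub_cancel] at this
    linarith
  calc 1 - E * α ^ n = (1 - E) + E * (1 - α ^ n) := by ring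
    _ ≤ C * (1 - α) * n + 1 * (n * (1 - α)) :=
      add_le_add hexp (mul_le_mul hexp_le hbernoulli
        (sub_nonneg.2 (pow_le_one₀ hα₀ hα₁)) zero_le_one)
    _ = (C + 1) * n * (1 - α) := by ring

lemma tendsto_log_one_sub_div_log_one_sub (hC : 0 ≤ C) (hn : 1 ≤ n)
    (hlow : ∀ α ∈ Set.Ioo (0 : ℝ) 1, Real.exp (-C * (1 - α) * n) * α ^ n ≤ b α)
    (hup : ∀ α ∈ Set.Ioo (0 : ℝ) 1, b α ≤ α ^ n) :
    Tendsto (fun α => Real.log ((1 - b α) / 2) / Real.log (1 - α)) (𝓝[<] 1) (𝓝 1) := by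
  have hmem : ∀ᶠ α : ℝ in 𝓝[<] 1, α ∈ Set.Ioo (0 : ℝ) 1 := Ioo_mem_nhdsLT one_pos
  have hsub : Tendsto (fun α : ℝ => 1 - α) (𝓝[<] 1) (𝓝[>] 0) := by
    refine tendsto_nhdsWithin_iff.2 ⟨?_, hmem.mono fun α hα => sub_pos.2 hα.2⟩
    simpa using ((continuous_const.sub continuous_id).tendsto (1 : ℝ)).mono_left
      nhdsWithin_le_nhds (f := fun α : ℝ => 1 - α)
  have hle : ∀ α ∈ Set.Ioo (0 : ℝ) 1, 1 - α ≤ 1 - b α := fun α hα => by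
    have := pow_le_of_le_one hα.1.le hα.2.le (by omega : n ≠ 0)
    linarith [hup α hα]
  refine tendsto_log_div_log_of_isTheta_rpow hsub ⟨?_, ?_⟩
  · refine .of_bound ((C + 1) * n / 2) ?_
    filter_upwards [hmem] with α hα
    have h₁ : 0 ≤ 1 - α := sub_nonneg.2 hα.2.le
    rw [Real.rpow_one, Real.norm_of_nonneg h₁, Real.norm_of_nonneg (by linarith [hle α hα])]
    linarith [one_sub_exp_mul_pow_le hC hα.1.le hα.2.le n, hlow α hα]
  · refine .of_bound 2 ?_
    filter_upwards [hmem] with α hα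
    have h₁ : 0 ≤ 1 - α := sub_nonneg.2 hα.2.le
    rw [Real.rpow_one, Real.norm_of_nonneg h₁, Real.norm_of_nonneg (by linarith [hle α hα])]
    linarith [hle α hα]

end Limits

end SRRW


/-- **The SRRW on the two-point group.**  Let `S` be the usual SRRW on `(ℤ₂, +)` with
reinforcement parameter `α ∈ (0,1)` and uniform step distribution.  Then
`ℙ(S_{2n-1} = 0) = 1/2`, and `e^{-C(1-α)n} αⁿ ≤ 2ℙ(S_{2n} = 0) - 1 ≤ αⁿ` for a constant
`C > 0` independent of `α` and `n`; consequently, for each `n ≥ 1`,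
`log(2ℙ(S_{2n}=0)-1)/log α → n` as `α → 0⁺` and
`log(1-ℙ(S_{2n}=0))/log(1-α) → 1` as `α → 1⁻`. -/
theorem srrw_two_point_group
    [MeasurableSpace (ZMod 2)] [MeasurableSingletonClass (ZMod 2)]
    {Ω : Type*} [MeasurableSpace Ω] (P : Measure Ω) [IsProbabilityMeasure P]
    (μ : Measure (ZMod 2)) [IsProbabilityMeasure μ]
    (hμ0 : μ {(0 : ZMod 2)} = 1 / 2) (hμ1 : μ {(1 : ZMod 2)} = 1 / 2)
    (X : ℝ → ℕ → Ω → ZMod 2)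
    (hX : ∀ α ∈ Set.Ioo (0 : ℝ) 1, IsSRRWAdd P α μ (X α)) :
    (∃ C : ℝ, 0 < C ∧ ∀ α ∈ Set.Ioo (0 : ℝ) 1, ∀ n : ℕ, 1 ≤ n →
      (P {ω | pos (X α) (2 * n - 1) ω = 0} = 1 / 2) ∧
      Real.exp (-C * (1 - α) * n) * α ^ n
        ≤ 2 * (P {ω | pos (X α) (2 * n) ω = 0}).toReal - 1 ∧
      2 * (P {ω | pos (X α) (2 * n) ω = 0}).toReal - 1 ≤ α ^ n) ∧
    (∀ n : ℕ, 1 ≤ n →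
      Tendsto
        (fun α : ℝ =>
          Real.log (2 * (P {ω | pos (X α) (2 * n) ω = 0}).toReal - 1) / Real.log α)
        (𝓝[>] (0 : ℝ)) (𝓝 (n : ℝ)) ∧
      Tendsto
        (fun α : ℝ =>
          Real.log (1 - (P {ω | pos (X α) (2 * n) ω = 0}).toReal) / Real.log (1 - α))
        (𝓝[<] (1 : ℝ)) (𝓝 (1 : ℝ))) := by
  let b (n : ℕ) (α : ℝ) := 2 * (P {ω | pos (X α) (2 * n) ω = 0}).toReal - 1
  have hrec (α : ℝ) (hα : α ∈ Set.Ioo (0 : ℝ) 1) :=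
    (hX α hα).toggleRecursion_signChar hα.1.le hμ0
  have hlow (n : ℕ) (α : ℝ) (hα : α ∈ Set.Ioo (0 : ℝ) 1) :
      Real.exp (-2 * (1 - α) * n) * α ^ n ≤ b n α := by
    simpa only [(hX α hα).correlation_signChar] using (hrec α hα).exp_mul_pow_le hα.1.le hα.2.le n
  have hup (n : ℕ) (α : ℝ) (hα : α ∈ Set.Ioo (0 : ℝ) 1) : b n α ≤ α ^ n := by
    simpa only [(hX α hα).correlation_signChar] using (hrec α hα).le_pow hα.1.le hα.2.le
      (by simp : 0 ∉ Finset.Icc 1 (2 * n)) (by simp)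
  refine ⟨⟨2, two_pos, fun α hα n hn => ⟨?_, hlow n α hα, hup n α hα⟩⟩, fun n hn => ⟨?_, ?_⟩⟩
  · exact (hX α hα).prob_pos_eq_zero_of_odd hα.1.le hμ0 ⟨n - 1, by omega⟩
  · exact tendsto_log_div_log_of_exp_mul_pow_le_of_le_pow zero_le_two (hlow n) (hup n)
  · refine (tendsto_log_one_sub_div_log_one_sub zero_le_two hn (hlow n) (hup n)).congr fun α => ?_
    congr 2
    ring
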